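/- If the measure center X^+ of a shift space X ⊆ 𝒜^∞ has the d̄-shadowing property, then X has the d̄-shadowing property. -/

import Mathlib

open MeasureTheory Filter Topology

namespace DbarPaper

variable {A : Type} [Fintype A] [DecidableEq A] [Inhabited A]
  [TopologicalSpace A] [DiscreteTopology A]
  [MeasurableSpace A] [MeasurableSingletonClass A]

/-- The shift map on the full shift `𝒜^∞ = ℕ → A`. -/
def shift : (ℕ → A) → (ℕ → A) := fun x n => x (n + 1)

/-- A shift space: a nonempty, closed, shift-invariant subset of the full shift. -/
def ShiftSpace (X : Set (ℕ → A)) : Prop :=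
  X.Nonempty ∧ IsClosed X ∧ ∀ x ∈ X, shift x ∈ X

/-- The word `w` appears in the sequence `x`. -/
def occursIn (w : List A) (x : ℕ → A) : Prop :=
  ∃ i : ℕ, w = List.ofFn (fun k : Fin w.length => x (i + (k : ℕ)))

/-- The language of a set `X`: all finite words appearing in points of `X`. -/
def lang (X : Set (ℕ → A)) : Set (List A) := {w | ∃ x ∈ X, occursIn w x}

/-- Words of length `n` in the language of `X`. -/
def langN (n : ℕ) (X : Set (ℕ → A)) : Set (List A) := {w | w ∈ lang X ∧ w.length = n}

/-- The pseudometric `d̄` on the full shift. -/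
noncomputable def dbar (x y : ℕ → A) : ℝ :=
  Filter.limsup
    (fun n => (((Finset.range n).filter (fun j => x j ≠ y j)).card : ℝ) / (n : ℝ))
    Filter.atTop

/-- Hausdorff "distance" between two sets induced by a `ℝ`-valued distance. -/
noncomputable def hausdist {Z : Type*} (d : Z → Z → ℝ) (P Q : Set Z) : ℝ :=
  max (⨆ p : P, ⨅ q : Q, d p q) (⨆ q : Q, ⨅ p : P, d p q)

/-- A probability measure is shift-invariant. -/
def invariantPM (μ : ProbabilityMeasure (ℕ → A)) : Prop :=
  (μ : Measure (ℕ → A)).map shift = (μ : Measure (ℕ → A))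

/-- `M_σ(X)`: shift-invariant Borel probability measures giving `X` full measure. -/
def Msigma (X : Set (ℕ → A)) : Set (ProbabilityMeasure (ℕ → A)) :=
  {μ | invariantPM μ ∧ μ X = 1}

/-- `ξ` is a joining of `μ` and `ν`: a `σ×σ`-invariant measure on the product with
marginals `μ` and `ν`. -/
def IsJoining (ξ : Measure ((ℕ → A) × (ℕ → A))) (μ ν : ProbabilityMeasure (ℕ → A)) : Prop :=
  ξ.map (Prod.map shift shift) = ξ ∧
  ξ.map Prod.fst = (μ : Measure (ℕ → A)) ∧ ξ.map Prod.snd = (ν : Measure (ℕ → A))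

/-- Ornstein's metric `d̄_M` on invariant measures. -/
noncomputable def dbarM (μ ν : ProbabilityMeasure (ℕ → A)) : ℝ :=
  sInf {r : ℝ | ∃ ξ : Measure ((ℕ → A) × (ℕ → A)),
    IsJoining ξ μ ν ∧ r = (ξ {p | p.1 0 ≠ p.2 0}).toReal}

/-- `d̄_M`-stability of a shift space (Austin). -/
def DbarMStable (X : Set (ℕ → A)) : Prop :=
  ∀ ε : ℝ, 0 < ε → ∃ U : Set (ProbabilityMeasure (ℕ → A)), IsOpen U ∧ Msigma X ⊆ U ∧
    ∀ ν ∈ U, invariantPM ν → ∃ μ ∈ Msigma X, dbarM μ ν < ε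

/-- The infinite concatenation of a sequence of (nonempty) words. -/
def concatSeq (w : ℕ → List A) : ℕ → A := fun n =>
  ((List.ofFn (fun i : Fin (n + 1) => w (i : ℕ))).flatten).getD n default

/-- The `d̄`-shadowing property. -/
def DbarShadowing (X : Set (ℕ → A)) : Prop :=
  ∀ ε : ℝ, 0 < ε → ∃ N : ℕ, 0 < N ∧ ∀ w : ℕ → List A,
    (∀ j, w j ∈ lang X) → (∀ j, N ≤ (w j).length) →
    ∃ x' ∈ X, dbar (concatSeq w) x' < ε

/-- `U_n(X)`: the union of cylinders of words of length `n` in the language of `X`. -/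
def cylNbhd (X : Set (ℕ → A)) (n : ℕ) : Set (ℕ → A) :=
  {x | List.ofFn (fun k : Fin n => x (k : ℕ)) ∈ lang X}

/-- The `n`-th (topological) Markov approximation of `X`: all sequences whose subwords of
length `n+1` belong to the language of `X`. -/
def markovApprox (X : Set (ℕ → A)) (n : ℕ) : Set (ℕ → A) :=
  {x | ∀ i : ℕ, List.ofFn (fun k : Fin (n + 1) => x (i + (k : ℕ))) ∈ lang X}

/-- Transitivity, in terms of the language. -/
def TransitiveShift (X : Set (ℕ → A)) : Prop :=
  ∀ u ∈ lang X, ∀ w ∈ lang X, ∃ v : List A, u ++ v ++ w ∈ lang X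

/-- Topological mixing, in terms of the language. -/
def MixingShift (X : Set (ℕ → A)) : Prop :=
  ∀ u ∈ lang X, ∀ w ∈ lang X, ∃ N : ℕ, ∀ m : ℕ, N ≤ m →
    ∃ v : List A, v.length = m ∧ u ++ v ++ w ∈ lang X

/-- Chain mixing: all but finitely many Markov approximations are topologically mixing. -/
def ChainMixing (X : Set (ℕ → A)) : Prop :=
  ∃ N : ℕ, ∀ n : ℕ, N ≤ n → MixingShift (markovApprox X n)

/-- `C` is the measure center of `X`: the smallest shift space contained in `X` of full
measure for every invariant measure of `X`. -/
def IsMeasureCenter (X C : Set (ℕ → A)) : Prop :=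
  ShiftSpace C ∧ C ⊆ X ∧ (∀ μ ∈ Msigma X, μ C = 1) ∧
  ∀ Y : Set (ℕ → A), ShiftSpace Y → Y ⊆ X → (∀ μ ∈ Msigma X, μ Y = 1) → C ⊆ Y

/-- Measure of the cylinder determined by a word of length `n`. -/
noncomputable def cylMeasure (μ : ProbabilityMeasure (ℕ → A)) {n : ℕ} (w : Fin n → A) : ℝ :=
  ((μ : Measure (ℕ → A)) {x | ∀ k : Fin n, x (k : ℕ) = w k}).toReal

/-- Entropy of the partition into cylinders of length `n`. -/
noncomputable def blockEntropy (μ : ProbabilityMeasure (ℕ → A)) (n : ℕ) : ℝ :=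
  -∑ w : Fin n → A, cylMeasure μ w * Real.log (cylMeasure μ w)

/-- Kolmogorov–Sinai entropy of a shift-invariant measure. -/
noncomputable def ksEntropy (μ : ProbabilityMeasure (ℕ → A)) : ℝ :=
  Filter.limsup (fun n => blockEntropy μ n / (n : ℝ)) Filter.atTop

/-- `μ` is ergodic for the shift. -/
def ErgodicPM (μ : ProbabilityMeasure (ℕ → A)) : Prop :=
  Ergodic shift (μ : Measure (ℕ → A))

/-- Ergodic measures are entropy dense in `M_σ(X)`. -/
def EntropyDense (X : Set (ℕ → A)) : Prop :=
  ∀ μ ∈ Msigma X, ∀ U : Set (ProbabilityMeasure (ℕ → A)), IsOpen U → μ ∈ U →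
    ∀ ε : ℝ, 0 < ε →
      ∃ ν ∈ Msigma X, ν ∈ U ∧ ErgodicPM ν ∧ |ksEntropy ν - ksEntropy μ| < ε

/-- Topological entropy of a shift space. -/
noncomputable def topEntropy (X : Set (ℕ → A)) : ℝ :=
  Filter.limsup (fun n => Real.log (Nat.card ↥(langN n X)) / (n : ℝ)) Filter.atTop

/-- The standard metric on the full shift. -/
noncomputable def rho (x y : ℕ → A) : ℝ :=
  open scoped Classical in
  if x = y then 0 else (2 : ℝ) ^ (-((sInf {j : ℕ | x j ≠ y j} : ℕ) : ℤ))

/-- Proximality of a shift space. -/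
def ProximalShift (X : Set (ℕ → A)) : Prop :=
  ∀ x ∈ X, ∀ y ∈ X,
    Filter.liminf (fun n => rho (shift^[n] x) (shift^[n] y)) Filter.atTop = 0

/-- Minimality of a shift space. -/
def MinimalShift (X : Set (ℕ → A)) : Prop :=
  ShiftSpace X ∧ ∀ Y : Set (ℕ → A), ShiftSpace Y → Y ⊆ X → Y = X

/-- An `A`-labeled directed multigraph on vertices `V` with edges `E`. -/
structure LabeledGraph (A V E : Type*) where
  src : E → V
  dst : E → V
  lab : E → A

namespace LabeledGraph

variable {A' V E : Type*}

/-- `es` is a path in `G` from `u` to `v`. -/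
def PathFromTo (G : LabeledGraph A' V E) (es : List E) (u v : V) : Prop :=
  es.Chain' (fun e f => G.dst e = G.src f) ∧
  es.head?.map G.src = some u ∧ es.getLast?.map G.dst = some v

/-- `G` is strongly connected. -/
def StronglyConnected (G : LabeledGraph A' V E) : Prop :=
  ∀ u v : V, ∃ es : List E, G.PathFromTo es u v

/-- `d` is the period of `G`: the gcd of lengths of closed paths. -/
def HasPeriod (G : LabeledGraph A' V E) (d : ℕ) : Prop :=
  (∀ (es : List E) (u : V), G.PathFromTo es u u → d ∣ es.length) ∧
  ∀ d' : ℕ, (∀ (es : List E) (u : V), G.PathFromTo es u u → d' ∣ es.length) → d' ∣ d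

/-- `b` is a safe symbol for `G`. -/
def SafeSymbol (G : LabeledGraph A' V E) (b : A') : Prop :=
  ∀ e : E, ∃ e' : E, G.src e' = G.src e ∧ G.dst e' = G.dst e ∧ G.lab e' = b

/-- The shift space presented by the labeled graph `G`: labels read along infinite paths. -/
def presents (G : LabeledGraph A' V E) : Set (ℕ → A') :=
  {x | ∃ e : ℕ → E, (∀ j, G.dst (e j) = G.src (e (j + 1))) ∧ ∀ j, x j = G.lab (e j)}

end LabeledGraph

/-- The coupling of a family of labeled graphs: an edge labeled `a` from `v` to `v'` exists
iff each `G k` has an edge from `v k` to `v' k` labeled `a`. -/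
def coupling {A' : Type*} {n : ℕ} {V E : Fin n → Type*}
    (G : ∀ k, LabeledGraph A' (V k) (E k)) :
    LabeledGraph A' (∀ k, V k) {p : (∀ k, E k) × A' // ∀ k, (G k).lab (p.1 k) = p.2} where
  src p := fun k => (G k).src (p.1.1 k)
  dst p := fun k => (G k).dst (p.1.1 k)
  lab p := p.1.2

/-- Sofic shift spaces: those presented by some finite labeled graph. -/
def Sofic (X : Set (ℕ → A)) : Prop :=
  ∃ (V E : Type) (_ : Fintype V) (_ : Fintype E) (G : LabeledGraph A V E),
    X = G.presents

/-- The coded shift generated by a finite set of words `B`: the closure of the set of all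
shifts of infinite concatenations of words from `B`. -/
def codedShift (B : Finset (List A)) : Set (ℕ → A) :=
  closure {x | ∃ (b : ℕ → List A) (k : ℕ), (∀ i, b i ∈ B) ∧ x = shift^[k] (concatSeq b)}

/-!
An orbit in a closed invariant set `X` visits a closed set `B` that is null for every invariant
measure on `X` with uniformly small frequency, since otherwise a limit of empirical measures would
be an invariant measure on `X` charging `B`. Take for `B` the set of points whose first `N` symbols
do not form a word of the measure center `C`. In a concatenation of long words of `X` few positions
then start a block of length `N` outside the language of `C`. Cutting the concatenation into blocks
of length `N` and replacing the bad ones changes it by little in `d̄`, and the result is shadowed by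
a point of `C`.
-/

section Orbits

variable {Ω : Type*}

/-- The number of times `j < n` at which the orbit of `x` under `T` visits `B`, as a real number. -/
noncomputable def visitCount (T : Ω → Ω) (B : Set Ω) (n : ℕ) (x : Ω) : ℝ :=
  birkhoffSum T (B.indicator 1) n x

theorem visitCount_eq_card (T : Ω → Ω) (B : Set Ω) [DecidablePred (· ∈ B)] (n : ℕ) (x : Ω) :
    visitCount T B n x = ((Finset.range n).filter fun j => T^[j] x ∈ B).card := by
  simp only [visitCount, birkhoffSum, Set.indicator_apply, Pi.one_apply, Finset.sum_boole]

theorem visitCount_nonneg (T : Ω → Ω) (B : Set Ω) (n : ℕ) (x : Ω) : 0 ≤ visitCount T B n x := by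
  classical
  rw [visitCount_eq_card]
  positivity

theorem visitCount_le (T : Ω → Ω) (B : Set Ω) (n : ℕ) (x : Ω) : visitCount T B n x ≤ n := by
  classical
  rw [visitCount_eq_card]
  exact_mod_cast (Finset.card_filter_le _ _).trans (Finset.card_range n).le

theorem visitCount_eq_self {T : Ω → Ω} {X : Set Ω} (hX : Set.MapsTo T X X) {x : Ω} (hx : x ∈ X)
    (n : ℕ) : visitCount T X n x = n := by
  classical
  rw [visitCount_eq_card, Finset.filter_true_of_mem fun j _ => hX.iterate j hx, Finset.card_range]

theorem visitCount_add (T : Ω → Ω) (B : Set Ω) (m n : ℕ) (x : Ω) :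
    visitCount T B (m + n) x = visitCount T B m x + visitCount T B n (T^[m] x) :=
  birkhoffSum_add T _ m n x

end Orbits

section EmpiricalMeasures

variable {Ω : Type*} [MeasurableSpace Ω]

/-- The empirical measure of the first `n + 1` points of the orbit of `x` under `T`; the shift of
the index by one makes it a probability measure for every `n`. -/
noncomputable def empiricalMeasure (T : Ω → Ω) (n : ℕ) (x : Ω) : ProbabilityMeasure Ω :=
  ⟨birkhoffAverage NNReal T Measure.dirac (n + 1) x, ⟨by
    simpa [birkhoffAverage, birkhoffSum, Measure.finsetSum_apply, ENNReal.smul_def] using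
      ENNReal.inv_mul_cancel (a := n + 1) (by simp) (by finiteness)⟩⟩

theorem integral_empiricalMeasure {E : Type*} [NormedAddCommGroup E] [NormedSpace ℝ E]
    [CompleteSpace E] {f : Ω → E} (hf : StronglyMeasurable f) (T : Ω → Ω) (n : ℕ) (x : Ω) :
    ∫ y, f y ∂(empiricalMeasure T n x : Measure Ω) = birkhoffAverage ℝ T f (n + 1) x := by
  change ∫ y, f y ∂(_ • ∑ j ∈ Finset.range (n + 1), Measure.dirac (T^[j] x)) = _
  rw [integral_smul_nnreal_measure, integral_finsetSum_measure fun j _ =>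
    integrable_dirac' hf enorm_lt_top]
  simp only [integral_dirac' _ _ hf]
  rw [NNReal.smul_def, NNReal.coe_inv, NNReal.coe_natCast, birkhoffAverage, birkhoffSum]

theorem measureReal_empiricalMeasure {B : Set Ω} (hB : MeasurableSet B) (T : Ω → Ω) (n : ℕ)
    (x : Ω) : (empiricalMeasure T n x : Measure Ω).real B = visitCount T B (n + 1) x / (n + 1) := by
  rw [← integral_indicator_one hB,
    integral_empiricalMeasure ((stronglyMeasurable_one).indicator hB), birkhoffAverage,
    visitCount, smul_eq_mul, Nat.cast_succ, inv_mul_eq_div]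

end EmpiricalMeasures

section InvariantMeasures

variable {Ω ι : Type*} [MeasurableSpace Ω] [TopologicalSpace Ω] [HasOuterApproxClosed Ω]
  {F : Filter ι} [F.NeBot] {μ : ProbabilityMeasure Ω}

theorem le_measure_of_tendsto_of_isClosed [OpensMeasurableSpace Ω] {ν : ι → ProbabilityMeasure Ω}
    (hν : Tendsto ν F (𝓝 μ)) {K : Set Ω} (hK : IsClosed K) {c : ENNReal}
    (hc : ∀ i, c ≤ (ν i : Measure Ω) K) : c ≤ (μ : Measure Ω) K :=
  calc c = F.limsup fun _ => c := (limsup_const c).symm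
    _ ≤ F.limsup fun i => (ν i : Measure Ω) K := limsup_le_limsup (Eventually.of_forall hc)
    _ ≤ (μ : Measure Ω) K := ProbabilityMeasure.limsup_measure_closed_le_of_tendsto hν hK

theorem map_eq_self_of_tendsto_empiricalMeasure [BorelSpace Ω] {T : Ω → Ω} (hT : Continuous T)
    {n : ι → ℕ} (hn : Tendsto n F atTop) {x : ι → Ω}
    (hμ : Tendsto (fun i => empiricalMeasure T (n i) (x i)) F (𝓝 μ)) :
    (μ : Measure Ω).map T = μ := by
  have : IsProbabilityMeasure ((μ : Measure Ω).map T) :=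
    Measure.isProbabilityMeasure_map hT.measurable.aemeasurable
  refine ext_of_forall_integral_eq_of_IsFiniteMeasure fun f => ?_
  rw [integral_map hT.measurable.aemeasurable f.continuous.aestronglyMeasurable]
  rw [ProbabilityMeasure.tendsto_iff_forall_integral_tendsto] at hμ
  have hsub := (hμ (f.compContinuous ⟨T, hT⟩)).sub (hμ f)
  have hdist : ∀ i, ‖∫ y, f.compContinuous ⟨T, hT⟩ y ∂(empiricalMeasure T (n i) (x i) : Measure Ω) -
      ∫ y, f y ∂(empiricalMeasure T (n i) (x i) : Measure Ω)‖ ≤ 2 * ‖f‖ / (n i + 1) := fun i => by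
    have hshift : birkhoffAverage ℝ T (f.compContinuous ⟨T, hT⟩) (n i + 1) (x i) =
        birkhoffAverage ℝ T f (n i + 1) (T (x i)) := by
      simp only [birkhoffAverage, birkhoffSum, BoundedContinuousFunction.compContinuous_apply,
        ContinuousMap.coe_mk, ← Function.iterate_succ_apply, Function.iterate_succ_apply']
    rw [integral_empiricalMeasure (BoundedContinuousFunction.continuous _).stronglyMeasurable,
      integral_empiricalMeasure f.continuous.stronglyMeasurable, hshift, ← dist_eq_norm,
      dist_birkhoffAverage_apply_birkhoffAverage, Nat.cast_succ]
    gcongr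
    exact f.dist_le_two_norm _ _
  have hzero : Tendsto (fun i => 2 * ‖f‖ / ((n i : ℝ) + 1)) F (𝓝 0) :=
    Tendsto.const_div_atTop (tendsto_atTop_add_const_right _ _
      (tendsto_natCast_atTop_atTop.comp hn)) _
  exact sub_eq_zero.1 (tendsto_nhds_unique hsub (squeeze_zero_norm hdist hzero))

variable [T2Space Ω] [CompactSpace Ω] [BorelSpace Ω]

theorem exists_invariant_measure_of_visitCount_ge {T : Ω → Ω} (hT : Continuous T) {X B : Set Ω}
    (hXc : IsClosed X) (hX : Set.MapsTo T X X) (hB : IsClosed B) {δ : ℝ}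
    (h : ∀ m : ℕ, ∃ x ∈ X, ∃ n ≥ m, δ * (n + 1) ≤ visitCount T B (n + 1) x) :
    ∃ μ : ProbabilityMeasure Ω, (μ : Measure Ω).map T = μ ∧ (μ : Measure Ω) X = 1 ∧
      ENNReal.ofReal δ ≤ (μ : Measure Ω) B := by
  choose x hxX n hn hvisit using h
  let ν : ℕ → ProbabilityMeasure Ω := fun m => empiricalMeasure T (n m) (x m)
  have : Nonempty (ProbabilityMeasure Ω) := ⟨ν 0⟩
  obtain ⟨μ, hμ⟩ : ∃ μ, Tendsto ν (hyperfilter ℕ) (𝓝 μ) := ⟨_, ((hyperfilter ℕ).map ν).le_nhds_lim⟩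
  have hn' : Tendsto n (hyperfilter ℕ) atTop :=
    (tendsto_atTop_mono hn tendsto_id).mono_left Nat.hyperfilter_le_atTop
  refine ⟨μ, map_eq_self_of_tendsto_empiricalMeasure hT hn' hμ, le_antisymm prob_le_one
    (le_measure_of_tendsto_of_isClosed hμ hXc fun m => ?_),
    le_measure_of_tendsto_of_isClosed hμ hB fun m => ?_⟩
  · rw [← ENNReal.ofReal_one, ENNReal.ofReal_le_iff_le_toReal (measure_ne_top _ _)]
    refine (measureReal_empiricalMeasure hXc.measurableSet T (n m) (x m)).symm.le.trans' ?_
    rw [visitCount_eq_self hX (hxX m), Nat.cast_succ, div_self (by positivity)]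
  · rw [ENNReal.ofReal_le_iff_le_toReal (measure_ne_top _ _)]
    refine (measureReal_empiricalMeasure hB.measurableSet T (n m) (x m)).symm.le.trans' ?_
    exact (le_div_iff₀ (by positivity)).2 (hvisit m)

theorem exists_visitCount_le {T : Ω → Ω} (hT : Continuous T) {X B : Set Ω} (hXc : IsClosed X)
    (hX : Set.MapsTo T X X) (hB : IsClosed B)
    (hnull : ∀ μ : ProbabilityMeasure Ω, (μ : Measure Ω).map T = μ → (μ : Measure Ω) X = 1 →
      (μ : Measure Ω) B = 0) {δ : ℝ} (hδ : 0 < δ) :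
    ∃ M : ℕ, ∀ x ∈ X, ∀ n, visitCount T B n x ≤ δ * n + M := by
  by_contra! h
  obtain ⟨μ, hμT, hμX, hμB⟩ := exists_invariant_measure_of_visitCount_ge hT hXc hX hB (δ := δ)
    fun m => by
      obtain ⟨x, hx, n, hn⟩ := h (m + 1)
      have hmn : m + 1 < n := by
        have := visitCount_le T B n x
        exact_mod_cast (by nlinarith [n.cast_nonneg (α := ℝ)] : ((m + 1 : ℕ) : ℝ) < n)
      obtain ⟨l, rfl⟩ := Nat.exists_eq_add_of_lt hmn
      refine ⟨x, hx, m + 1 + l, by omega, ?_⟩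
      push_cast at hn ⊢
      linarith
  rw [hnull μ hμT hμX, nonpos_iff_eq_zero, ENNReal.ofReal_eq_zero] at hμB
  exact hδ.not_ge hμB

end InvariantMeasures

section Words

variable {α : Type}

theorem shift_iterate_apply (n : ℕ) (x : ℕ → α) (k : ℕ) : shift^[n] x k = x (k + n) := by
  induction n generalizing k with
  | zero => rfl
  | succ n ih => rw [Function.iterate_succ_apply', shift, ih, add_right_comm, add_assoc]

theorem visitCount_shift_le_of_eqOn {B : Set (ℕ → α)} {N : ℕ}
    (hB : DependsOn (· ∈ B) (Set.Iio N)) {x y : ℕ → α} {m : ℕ} (hxy : Set.EqOn x y (Set.Iio m)) :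
    visitCount shift B m x ≤ visitCount shift B m y + N := by
  rcases le_total m N with hmN | hNm
  · have hm : (m : ℝ) ≤ N := by exact_mod_cast hmN
    linarith [visitCount_le shift B m x, visitCount_nonneg shift B m y]
  · obtain ⟨l, rfl⟩ := Nat.exists_eq_add_of_le' hNm
    have hinit : visitCount shift B l x = visitCount shift B l y := by
      classical
      rw [visitCount_eq_card, visitCount_eq_card]
      congr 2
      refine Finset.filter_congr fun j hj => Iff.of_eq (hB fun k hk => ?_)
      rw [shift_iterate_apply, shift_iterate_apply]
      exact hxy (add_comm k j ▸ add_lt_add (Finset.mem_range.1 hj) hk)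
    rw [visitCount_add, visitCount_add]
    linarith [visitCount_le shift B N (shift^[l] x), visitCount_nonneg shift B N (shift^[l] y)]

theorem ofFn_mem_lang {X : Set (ℕ → α)} {x : ℕ → α} (hx : x ∈ X) (n : ℕ) :
    List.ofFn (fun k : Fin n => x k) ∈ lang X :=
  ⟨x, hx, 0, by simp⟩

theorem exists_mem_getElem_eq_of_mem_lang {X : Set (ℕ → α)} (hX : Set.MapsTo shift X X) {w : List α}
    (hw : w ∈ lang X) : ∃ x ∈ X, ∀ p (hp : p < w.length), w[p] = x p := by
  obtain ⟨x, hx, i, hwx⟩ := hw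
  refine ⟨shift^[i] x, hX.iterate i hx, fun p hp => ?_⟩
  rw [shift_iterate_apply, List.getElem_of_eq hwx, List.getElem_ofFn, add_comm]

theorem dependsOn_mem_cylNbhd (C : Set (ℕ → α)) (N : ℕ) :
    DependsOn (· ∈ cylNbhd C N) (Set.Iio N) := fun x y hxy => by
  have hprefix : (fun k : Fin N => x k) = fun k : Fin N => y k := funext fun k => hxy k k.2
  simp only [cylNbhd, Set.mem_ofPred_eq, hprefix]

theorem subset_cylNbhd (C : Set (ℕ → α)) (N : ℕ) : C ⊆ cylNbhd C N := fun _ hc =>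
  ofFn_mem_lang hc N

theorem exists_mem_lang_length_eq {C : Set (ℕ → α)} (hC : C.Nonempty) (N : ℕ) (z : ℕ → α) :
    ∃ u ∈ lang C, u.length = N ∧ (z ∈ cylNbhd C N → ∀ p (hp : p < u.length), u[p] = z p) := by
  by_cases hz : z ∈ cylNbhd C N
  · exact ⟨_, hz, List.length_ofFn, fun _ p _ => List.getElem_ofFn _⟩
  · obtain ⟨c, hc⟩ := hC
    exact ⟨_, ofFn_mem_lang hc N, List.length_ofFn, fun h => absurd h hz⟩

variable [TopologicalSpace α]

theorem continuous_shift : Continuous (shift : (ℕ → α) → (ℕ → α)) :=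
  continuous_pi fun n => continuous_apply (n + 1)

theorem isClopen_cylNbhd [DiscreteTopology α] (C : Set (ℕ → α)) (N : ℕ) :
    IsClopen (cylNbhd C N) :=
  (isClopen_discrete {u : Fin N → α | List.ofFn u ∈ lang C}).preimage
    (continuous_pi fun k : Fin N => continuous_apply (k : ℕ))

end Words

section Concatenation

variable {α : Type} [Inhabited α] {w : ℕ → List α}

theorem getD_flatten_ofFn (hw : ∀ j, w j ≠ []) {n k : ℕ} (hnk : n < k) :
    (List.ofFn fun i : Fin k => w i).flatten.getD n default = concatSeq w n := by
  obtain ⟨d, rfl⟩ := Nat.exists_eq_add_of_le (Nat.succ_le_of_lt hnk)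
  have hlen : n < (List.ofFn fun i : Fin (n + 1) => w i).flatten.length := by
    rw [List.length_flatten, List.map_ofFn, List.sum_ofFn]
    have h := Finset.card_nsmul_le_sum (Finset.univ : Finset (Fin (n + 1)))
      (fun i => (w i).length) 1 fun i _ => List.length_pos_iff.2 (hw i)
    simpa using h
  rw [concatSeq, List.ofFn_add, List.flatten_append]
  exact List.getD_append _ _ _ _ hlen

theorem concatSeq_of_lt_length {p : ℕ} (hp : p < (w 0).length) : concatSeq w p = (w 0)[p] := by
  rw [concatSeq, List.ofFn_succ, List.flatten_cons]
  exact (List.getD_append _ _ _ _ hp).trans (List.getD_eq_getElem _ _ hp)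

theorem shift_iterate_length_concatSeq (hw : ∀ j, w j ≠ []) :
    shift^[(w 0).length] (concatSeq w) = concatSeq fun j => w (j + 1) := by
  funext n
  have hpos : 0 < (w 0).length := List.length_pos_iff.2 (hw 0)
  rw [shift_iterate_apply, concatSeq, List.ofFn_succ, List.flatten_cons]
  refine (List.getD_append_right _ _ _ _ (Nat.le_add_left _ _)).trans ?_
  rw [Nat.add_sub_cancel]
  exact getD_flatten_ofFn (w := fun j => w (j + 1)) (fun j => hw (j + 1)) (by omega)

theorem concatSeq_mul_add {N : ℕ} (hN : 0 < N) (hw : ∀ j, (w j).length = N) (k : ℕ) {p : ℕ}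
    (hp : p < (w k).length) : concatSeq w (k * N + p) = (w k)[p] := by
  have hne : ∀ j, w j ≠ [] := fun j => List.length_pos_iff.1 (hw j ▸ hN)
  induction k generalizing w with
  | zero => rw [Nat.zero_mul, Nat.zero_add, concatSeq_of_lt_length hp]
  | succ k ih =>
    rw [← ih (w := fun j => w (j + 1)) (fun j => hw (j + 1)) hp (fun j => hne (j + 1)),
      ← shift_iterate_length_concatSeq hne, shift_iterate_apply, hw 0]
    congr 1
    ring

theorem visitCount_concatSeq_le {X B : Set (ℕ → α)} (hX : Set.MapsTo shift X X) {N : ℕ}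
    (hB : DependsOn (· ∈ B) (Set.Iio N)) {δ : ℝ} {M L : ℕ}
    (hM : ∀ x ∈ X, ∀ n, visitCount shift B n x ≤ δ * n + M) (hδ : 0 ≤ δ) (hL : M + N ≤ δ * L)
    (hL0 : 0 < L) (hw : ∀ j, w j ∈ lang X) (hwL : ∀ j, L ≤ (w j).length) (n : ℕ) :
    visitCount shift B n (concatSeq w) ≤ 2 * δ * n + (M + N) := by
  induction n using Nat.strong_induction_on generalizing w with
  | _ n ih =>
  have hfirst : ∀ m ≤ (w 0).length, visitCount shift B m (concatSeq w) ≤ δ * m + (M + N) := by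
    intro m hm
    obtain ⟨x, hx, hwx⟩ := exists_mem_getElem_eq_of_mem_lang hX (hw 0)
    have hagree : Set.EqOn (concatSeq w) x (Set.Iio m) := fun p hp =>
      (concatSeq_of_lt_length (hp.trans_le hm)).trans (hwx p _)
    linarith [visitCount_shift_le_of_eqOn hB hagree, hM x hx m]
  rcases le_total n (w 0).length with hn | hn
  · have hδn : 0 ≤ δ * n := by positivity
    linarith [hfirst n hn]
  · obtain ⟨m, rfl⟩ := Nat.exists_eq_add_of_le hn
    have hlen : 0 < (w 0).length := hL0.trans_le (hwL 0)
    have hne : ∀ j, w j ≠ [] := fun j => List.length_pos_iff.1 (hL0.trans_le (hwL j))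
    have hrest := ih m (by omega) (fun j => hw (j + 1)) fun j => hwL (j + 1)
    have hcost : (M + N : ℝ) ≤ δ * (w 0).length := hL.trans (by gcongr; exact hwL 0)
    rw [visitCount_add, shift_iterate_length_concatSeq hne]
    push_cast
    linarith [hfirst _ le_rfl]

end Concatenation

section Dbar

variable {α : Type} [DecidableEq α]

/-- The number of positions `j < n` at which `x` and `y` differ. -/
def mismatchCount (x y : ℕ → α) (n : ℕ) : ℕ := ((Finset.range n).filter fun j => x j ≠ y j).card

theorem mismatchCount_triangle (x y z : ℕ → α) (n : ℕ) :
    mismatchCount x z n ≤ mismatchCount x y n + mismatchCount y z n := by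
  refine (Finset.card_le_card fun j hj => ?_).trans (Finset.card_union_le _ _)
  rw [← Finset.filter_or, Finset.mem_filter]
  rw [Finset.mem_filter] at hj
  exact ⟨hj.1, (hj.2.ne_or_ne (y j)).imp_right Ne.symm⟩

theorem mismatchCount_div_mem_Icc (x y : ℕ → α) (n : ℕ) :
    (mismatchCount x y n : ℝ) / n ∈ Set.Icc 0 1 :=
  ⟨by positivity, div_le_one_of_le₀ (by
    exact_mod_cast (Finset.card_filter_le _ _).trans (Finset.card_range n).le) (by positivity)⟩

theorem isBoundedUnder_le_mismatchCount_div (x y : ℕ → α) :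
    IsBoundedUnder (· ≤ ·) atTop fun n => (mismatchCount x y n : ℝ) / n :=
  isBoundedUnder_of ⟨1, fun n => (mismatchCount_div_mem_Icc x y n).2⟩

theorem isBoundedUnder_ge_mismatchCount_div (x y : ℕ → α) :
    IsBoundedUnder (· ≥ ·) atTop fun n => (mismatchCount x y n : ℝ) / n :=
  isBoundedUnder_of ⟨0, fun n => (mismatchCount_div_mem_Icc x y n).1⟩

theorem dbar_triangle (x y z : ℕ → α) : dbar x z ≤ dbar x y + dbar y z := by
  have hle := isBoundedUnder_le_mismatchCount_div (α := α)
  have hge := isBoundedUnder_ge_mismatchCount_div (α := α)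
  calc dbar x z
      ≤ limsup (fun n => (mismatchCount x y n : ℝ) / n + (mismatchCount y z n : ℝ) / n) atTop := by
        refine limsup_le_limsup (Eventually.of_forall fun n => ?_) (hge x z).isCoboundedUnder_le
          (isBoundedUnder_le_add (hle x y) (hle y z))
        change (mismatchCount x z n : ℝ) / n ≤
          (mismatchCount x y n : ℝ) / n + (mismatchCount y z n : ℝ) / n
        rw [← add_div]
        gcongr
        exact_mod_cast mismatchCount_triangle x y z n
    _ ≤ dbar x y + dbar y z :=
        limsup_add_le (hge x y) (hle x y) (hge y z).isCoboundedUnder_le (hle y z)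

theorem dbar_le_of_mismatchCount_le {x y : ℕ → α} {a b : ℝ}
    (h : ∀ n : ℕ, (mismatchCount x y n : ℝ) ≤ a * n + b) : dbar x y ≤ a := by
  have hlim : Tendsto (fun n : ℕ => a + b / n) atTop (𝓝 a) := by
    simpa only [add_zero] using (tendsto_const_div_atTop_nhds_zero_nat b).const_add a
  rw [← hlim.limsup_eq]
  refine limsup_le_limsup ?_ (isBoundedUnder_ge_mismatchCount_div x y).isCoboundedUnder_le
    hlim.isBoundedUnder_le
  filter_upwards [eventually_gt_atTop 0] with n hn
  have hn' : (0 : ℝ) < n := by exact_mod_cast hn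
  change (mismatchCount x y n : ℝ) / n ≤ _
  rw [div_le_iff₀ hn', add_mul, div_mul_cancel₀ _ hn'.ne']
  exact h n

theorem exists_concatSeq_mismatchCount_le [Inhabited α] {C : Set (ℕ → α)} (hC : C.Nonempty) {N : ℕ}
    (hN : 0 < N) (y : ℕ → α) :
    ∃ v : ℕ → List α, (∀ j, v j ∈ lang C) ∧ (∀ j, (v j).length = N) ∧
      ∀ n, (mismatchCount y (concatSeq v) n : ℝ) ≤ N * visitCount shift (cylNbhd C N)ᶜ n y := by
  classical
  choose v hvC hvN hv using fun j => exists_mem_lang_length_eq hC N (shift^[j * N] y)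
  refine ⟨v, hvC, hvN, fun n => ?_⟩
  rw [visitCount_eq_card]
  norm_cast
  refine Finset.card_le_mul_card_image_of_maps_to (f := fun j => j / N * N) (fun j hj => ?_) N
    fun i _ => ?_
  · rw [Finset.mem_filter, Finset.mem_range] at hj ⊢
    refine ⟨(Nat.div_mul_le_self j N).trans_lt hj.1, fun hgood => hj.2 ?_⟩
    have hmod : j % N < (v (j / N)).length := (hvN _).symm ▸ Nat.mod_lt j hN
    have hblock := concatSeq_mul_add hN hvN (j / N) hmod
    rw [hv _ hgood _ hmod, shift_iterate_apply, Nat.div_add_mod', Nat.mod_add_div'] at hblock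
    exact hblock.symm
  · calc _ ≤ (Finset.Ico i (i + N)).card := Finset.card_le_card fun j hj => by
          have hji : j / N * N = i := (Finset.mem_filter.1 hj).2
          have hdiv := Nat.div_add_mod' j N
          have hmod := Nat.mod_lt j hN
          rw [Finset.mem_Ico]
          omega
      _ = N := by simp

end Dbar

section MeasureCenter

variable {α : Type} [Finite α] [TopologicalSpace α] [DiscreteTopology α] [MeasurableSpace α]
  [MeasurableSingletonClass α] {X C : Set (ℕ → α)}

theorem exists_visitCount_compl_cylNbhd_le (hXc : IsClosed X) (hX : Set.MapsTo shift X X)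
    (hC : ∀ μ ∈ Msigma X, μ C = 1) (N : ℕ) {δ : ℝ} (hδ : 0 < δ) :
    ∃ M : ℕ, ∀ x ∈ X, ∀ n, visitCount shift (cylNbhd C N)ᶜ n x ≤ δ * n + M := by
  have hclopen := isClopen_cylNbhd C N
  refine exists_visitCount_le continuous_shift hXc hX hclopen.compl.isClosed
    (fun μ hμ hμX => ?_) hδ
  have hμC : μ C = 1 := hC μ ⟨hμ, by simp [ProbabilityMeasure.coeFn_def, hμX]⟩
  have hle : μ C ≤ μ (cylNbhd C N) := μ.apply_mono (subset_cylNbhd C N)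
  rw [prob_compl_eq_zero_iff hclopen.isOpen.measurableSet]
  refine le_antisymm prob_le_one ?_
  rw [← ProbabilityMeasure.ennreal_coeFn_eq_coeFn_toMeasure]
  exact_mod_cast hμC ▸ hle

variable [DecidableEq α] [Inhabited α]

theorem exists_concatSeq_dbar_le (hXc : IsClosed X) (hX : Set.MapsTo shift X X)
    (hCne : C.Nonempty) (hC : ∀ μ ∈ Msigma X, μ C = 1) {N : ℕ} (hN : 0 < N) {ε : ℝ} (hε : 0 < ε) :
    ∃ L : ℕ, 0 < L ∧ ∀ w : ℕ → List α, (∀ j, w j ∈ lang X) → (∀ j, L ≤ (w j).length) →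
      ∃ v : ℕ → List α, (∀ j, v j ∈ lang C) ∧ (∀ j, (v j).length = N) ∧
        dbar (concatSeq w) (concatSeq v) ≤ ε := by
  obtain ⟨δ, hδ, hδε⟩ : ∃ δ : ℝ, 0 < δ ∧ N * (2 * δ) = ε :=
    ⟨ε / (2 * N), by positivity, by field_simp⟩
  obtain ⟨M, hM⟩ := exists_visitCount_compl_cylNbhd_le hXc hX hC N hδ
  obtain ⟨L, hL⟩ := exists_nat_ge ((M + N) / δ)
  rw [div_le_iff₀' hδ] at hL
  have hL0 : 0 < L := by
    have : (0 : ℝ) < δ * L := hL.trans_lt' (by positivity)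
    exact_mod_cast pos_of_mul_pos_right this hδ.le
  refine ⟨L, hL0, fun w hw hwL => ?_⟩
  obtain ⟨v, hvC, hvN, hmis⟩ := exists_concatSeq_mismatchCount_le hCne hN (concatSeq w)
  refine ⟨v, hvC, hvN, dbar_le_of_mismatchCount_le (b := N * (M + N)) fun n => ?_⟩
  have hB : DependsOn (· ∈ (cylNbhd C N)ᶜ) (Set.Iio N) := fun _ _ h =>
    congrArg Not (dependsOn_mem_cylNbhd C N h)
  calc (mismatchCount (concatSeq w) (concatSeq v) n : ℝ)
      ≤ N * visitCount shift (cylNbhd C N)ᶜ n (concatSeq w) := hmis n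
    _ ≤ N * (2 * δ * n + (M + N)) := by
        gcongr
        exact visitCount_concatSeq_le hX hB hM hδ.le hL hL0 hw hwL n
    _ = ε * n + N * (M + N) := by rw [← hδε]; ring

theorem statement12_general (hXc : IsClosed X) (hX : Set.MapsTo shift X X) (hCne : C.Nonempty)
    (hCX : C ⊆ X) (hC : ∀ μ ∈ Msigma X, μ C = 1) (hshad : DbarShadowing C) :
    DbarShadowing X := by
  intro ε hε
  obtain ⟨N, hN, hshadow⟩ := hshad (ε / 2) (half_pos hε)
  obtain ⟨L, hL0, hL⟩ := exists_concatSeq_dbar_le hXc hX hCne hC hN (half_pos hε)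
  refine ⟨L, hL0, fun w hw hwL => ?_⟩
  obtain ⟨v, hvC, hvN, hwv⟩ := hL w hw hwL
  obtain ⟨x, hx, hvx⟩ := hshadow v hvC fun j => (hvN j).ge
  exact ⟨x, hCX hx, by linarith [dbar_triangle (concatSeq w) (concatSeq v) x]⟩

end MeasureCenter

/-- if the measure center of `X` has the `d̄`-shadowing property, then so
does `X`. -/
theorem statement12 (hA : 2 ≤ Fintype.card A) (X C : Set (ℕ → A)) (hX : ShiftSpace X)
    (hC : IsMeasureCenter X C) (hshad : DbarShadowing C) :
    DbarShadowing X :=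
  statement12_general hX.2.1 hX.2.2 hC.1.1 hC.2.1 hC.2.2.1 hshad

end DbarPaper
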